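/- Let 0 < p < q < 2 and α > 1. If f is holomorphic and zero-free on the unit disk 𝔻 (f(z) ≠ 0 for all z ∈ 𝔻) with ∫_𝔻 |f(z)|^p dA_α(z) < ∞, then with r = √(p/q) one has (∫_𝔻 |f(rz)|^q dA_α(z))^{1/q} ≤ (∫_𝔻 |f(z)|^p dA_α(z))^{1/p}. -/

import Mathlib

open MeasureTheory Metric

/-- The weighted Bergman measure `dA_α` on the unit disk:
density `((α-1)/π)(1-|z|²)^(α-2)` with respect to Lebesgue area measure. -/
noncomputable def bergmanMeasure (α : ℝ) : Measure ℂ :=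
  (volume.restrict (ball (0 : ℂ) 1)).withDensity
    (fun z => ENNReal.ofReal ((α - 1) / Real.pi * (1 - ‖z‖ ^ 2) ^ (α - 2)))

open scoped ComplexConjugate

/-- moments -/
noncomputable def bw (α : ℝ) (n : ℕ) : ℝ := n.factorial / ∏ j ∈ Finset.range n, (α + j)

lemma bw_prod_pos {α : ℝ} (hα : 1 < α) (n : ℕ) : 0 < ∏ j ∈ Finset.range n, (α + j) :=
  Finset.prod_pos fun j _ => by positivity

lemma bw_nonneg {α : ℝ} (hα : 1 < α) (n : ℕ) : 0 ≤ bw α n :=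
  div_nonneg (by positivity) (bw_prod_pos hα n).le

lemma bw_succ {α : ℝ} (hα : 1 < α) (n : ℕ) : bw α (n+1) = (n+1)/α * bw (α+1) n := by
  have h1 := bw_prod_pos (α := α+1) (by linarith) n
  unfold bw
  rw [Finset.prod_range_succ', Nat.factorial_succ]
  have : ∏ k ∈ Finset.range n, (α + ((k+1 : ℕ):ℝ)) = ∏ j ∈ Finset.range n, (α + 1 + j) := by
    apply Finset.prod_congr rfl; intros; push_cast; ring
  rw [this]
  push_cast
  have : α ≠ 0 := by positivity
  field_simp
  simp

lemma bw_anti {α : ℝ} (hα : 1 < α) (n : ℕ) : bw (α+1) n ≤ bw α n := by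
  unfold bw
  have := bw_prod_pos hα n
  gcongr with i hi
  linarith

lemma gamma_prod {α : ℝ} (hα : 1 < α) (n : ℕ) :
    Real.Gamma (α + n) = (∏ j ∈ Finset.range n, (α + j)) * Real.Gamma α := by
  induction n with
  | zero => simp
  | succ n ih =>
    rw [Finset.prod_range_succ, show α + ((n+1:ℕ):ℝ) = (α + n) + 1 by push_cast; ring,
      Real.Gamma_add_one (by positivity), ih]; ring

lemma beta_mom {α : ℝ} (hα : 1 < α) (n : ℕ) :
    ∫ t in (0:ℝ)..1, (α-1) * (t^n * (1-t)^(α-2)) = bw α n := by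
  rw [intervalIntegral.integral_const_mul]
  have h1 := ProbabilityTheory.beta_eq_betaIntegralReal (n+1) (α-1) (by positivity) (by linarith)
  have h2 : Complex.betaIntegral ((n+1 : ℝ)) ((α-1 : ℝ)) =
      ((∫ t in (0:ℝ)..1, (t^n * (1-t)^(α-2)) : ℝ) : ℂ) := by
    unfold Complex.betaIntegral
    rw [← intervalIntegral.integral_ofReal]
    apply intervalIntegral.integral_congr_ae
    refine Filter.Eventually.of_forall fun t ht => ?_
    rw [Set.uIoc_of_le zero_le_one] at ht
    push_cast
    rw [Complex.ofReal_cpow (by linarith [ht.2])]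
    push_cast
    rw [show ((n:ℂ)+1-1) = n by ring, Complex.cpow_natCast, show (α:ℂ)-1-1 = α-2 by ring]
  rw [h2, Complex.ofReal_re] at h1
  rw [← h1]
  unfold ProbabilityTheory.beta bw
  have h3 := gamma_prod hα n
  have h4 : Real.Gamma α = (α-1) * Real.Gamma (α-1) := by
    rw [← Real.Gamma_add_one (by linarith)]; ring_nf
  rw [show (n:ℝ)+1+(α-1) = α + n by ring, h3, Real.Gamma_nat_eq_factorial, h4]
  have h5 := bw_prod_pos hα n
  have h6 : 0 < Real.Gamma (α-1) := Real.Gamma_pos_of_pos (by linarith)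
  have h7 : 0 < α - 1 := by linarith
  field_simp

lemma berg_dens_nonneg {α : ℝ} (hα : 1 < α) {z : ℂ} (hz : z ∈ ball (0:ℂ) 1) :
    0 ≤ (α - 1) / Real.pi * (1 - ‖z‖ ^ 2) ^ (α - 2) := by
  have : ‖z‖ < 1 := by simpa using hz
  have h : 0 ≤ 1 - ‖z‖^2 := by nlinarith [norm_nonneg z]
  have := Real.pi_pos
  have : 0 ≤ α - 1 := by linarith
  positivity

lemma berg_dens_meas (α : ℝ) :
    Measurable (fun z : ℂ => (α - 1) / Real.pi * (1 - ‖z‖ ^ 2) ^ (α - 2)) := by fun_prop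

lemma integral_berg {α : ℝ} (hα : 1 < α) (f : ℂ → ℝ) :
    ∫ z, f z ∂(bergmanMeasure α) =
      ∫ z in ball (0:ℂ) 1, ((α - 1) / Real.pi * (1 - ‖z‖ ^ 2) ^ (α - 2)) * f z := by
  unfold bergmanMeasure
  rw [integral_withDensity_eq_integral_toReal_smul₀ (by
    exact (berg_dens_meas α).ennreal_ofReal.aemeasurable) (by simp)]
  apply setIntegral_congr_fun measurableSet_ball
  intro z hz
  simp only [smul_eq_mul]
  rw [ENNReal.toReal_ofReal (berg_dens_nonneg hα hz)]

lemma integral_norm_pow {α : ℝ} (hα : 1 < α) (n : ℕ) :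
    ∫ z, ‖z‖^(2*n) ∂(bergmanMeasure α) = bw α n := by
  rw [integral_berg hα, ← integral_indicator measurableSet_ball]
  have : ∀ z : ℂ, (ball (0:ℂ) 1).indicator (fun z => ((α - 1) / Real.pi * (1 - ‖z‖ ^ 2) ^ (α - 2)) * ‖z‖^(2*n)) z
     = (fun y : ℝ => (Set.Iio (1:ℝ)).indicator (fun y => ((α - 1) / Real.pi * (1 - y ^ 2) ^ (α - 2)) * y^(2*n)) y) ‖z‖ := by
    intro z
    by_cases h : ‖z‖ < 1 <;> simp [Set.indicator, h]
  simp_rw [this]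
  rw [integral_fun_norm_addHaar volume (fun y : ℝ => (Set.Iio (1:ℝ)).indicator (fun y => ((α - 1) / Real.pi * (1 - y ^ 2) ^ (α - 2)) * y^(2*n)) y)]
  have hv : (volume : Measure ℂ).real (ball 0 1) = Real.pi := by
    simp [Measure.real]
  rw [hv, Complex.finrank_real_complex, ← beta_mom hα n, intervalIntegral.integral_of_le zero_le_one]
  have h2 := integral_comp_rpow_Ioi (E := ℝ) (fun t => (Set.Iio (1:ℝ)).indicator (fun t => (α-1) * (t^n * (1-t)^(α-2))) t) (p := 2) (by norm_num)
  have h3 : ∫ t in Set.Ioo (0:ℝ) 1, (α-1) * (t^n * (1-t)^(α-2)) =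
    ∫ t in Set.Ioi (0:ℝ), (Set.Iio (1:ℝ)).indicator (fun t => (α-1) * (t^n * (1-t)^(α-2))) t := by
    rw [integral_indicator measurableSet_Iio, Measure.restrict_restrict measurableSet_Iio]
    congr 2
    ext; simp [and_comm]
  rw [integral_Ioc_eq_integral_Ioo, h3, ← h2, nsmul_eq_mul, smul_eq_mul, ← integral_const_mul, ← integral_const_mul]
  apply setIntegral_congr_fun measurableSet_Ioi
  intro y hy
  have hy : 0 < y := hy
  have hy2 : y^(2:ℝ) = y^2 := by norm_cast
  have : y^2 < 1 ↔ y < 1 := by constructor <;> intro <;> nlinarith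
  have := Real.pi_pos
  by_cases h : y < 1 <;> simp [Set.indicator, h, *] 
  norm_num
  field_simp
  rw [pow_mul]

lemma bw_zero (α : ℝ) : bw α 0 = 1 := by simp [bw]

lemma berg_prob {α : ℝ} (hα : 1 < α) : IsProbabilityMeasure (bergmanMeasure α) := by
  have h := integral_norm_pow hα 0
  simp only [mul_zero, pow_zero, integral_const, smul_eq_mul, mul_one, bw_zero] at h
  constructor
  have := (ENNReal.toReal_eq_one_iff _).1 h
  exact this

lemma berg_ae_ball (α : ℝ) : ∀ᵐ z ∂(bergmanMeasure α), z ∈ ball (0:ℂ) 1 := by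
  unfold bergmanMeasure
  exact (withDensity_absolutelyContinuous _ _).ae_le (ae_restrict_mem measurableSet_ball)

lemma berg_integrable {E : Type*} [NormedAddCommGroup E] [SecondCountableTopology E] {α : ℝ} (hα : 1 < α) {f : ℂ → E} (hf : Continuous f) :
    Integrable f (bergmanMeasure α) := by
  have := berg_prob hα
  borelize E
  obtain ⟨C, hC⟩ := (isCompact_closedBall (0:ℂ) 1).exists_bound_of_continuousOn hf.continuousOn
  refine Integrable.of_bound hf.aestronglyMeasurable C ?_
  filter_upwards [berg_ae_ball α] with z hz using hC z (ball_subset_closedBall hz)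

lemma berg_rotAux {c : ℂ} (hc : ‖c‖ = 1) : ∃ e : ℂ ≃ₗᵢ[ℝ] ℂ, ∀ z, e z = c * z :=
  ⟨rotation ⟨c, by simpa [Submonoid.unitSphere] using hc⟩, fun _ => rfl⟩

lemma berg_rotMeas {c : ℂ} (hc : ‖c‖ = 1) : MeasurableEmbedding (fun z : ℂ => c * z) := by
  obtain ⟨e, he⟩ := berg_rotAux hc
  have := e.toHomeomorph.measurableEmbedding
  rwa [show (⇑e.toHomeomorph) = fun z => c * z from funext he] at this

lemma berg_rot (α : ℝ) {c : ℂ} (hc : ‖c‖ = 1) :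
    MeasurePreserving (fun z : ℂ => c * z) (bergmanMeasure α) (bergmanMeasure α) := by
  have h0 : MeasurePreserving (fun z : ℂ => c * z) volume volume := by
    obtain ⟨e, he⟩ := berg_rotAux hc
    have := e.measurePreserving
    rwa [show (⇑e) = fun z => c * z from funext he] at this
  refine ⟨by fun_prop, ?_⟩
  ext s hs
  have hm : Measurable (fun z : ℂ => c * z) := by fun_prop
  rw [Measure.map_apply hm hs]
  unfold bergmanMeasure
  rw [withDensity_apply _ hs, withDensity_apply _ (hm hs), Measure.restrict_restrict hs,
    Measure.restrict_restrict (hm hs)]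
  have h1 := h0.setLIntegral_comp_preimage (s := s ∩ ball 0 1) (hs.inter measurableSet_ball)
    (f := (fun z => ENNReal.ofReal ((α - 1) / Real.pi * (1 - ‖z‖ ^ 2) ^ (α - 2))))
    (berg_dens_meas α).ennreal_ofReal
  rw [← h1]
  have h2 : (fun z : ℂ => c * z) ⁻¹' (s ∩ ball 0 1) = (fun z : ℂ => c * z) ⁻¹' s ∩ ball 0 1 := by
    ext z; simp [hc]
  rw [h2]
  simp [hc]

lemma berg_offdiag {α : ℝ} {m n : ℕ} (hmn : m ≠ n) :
    ∫ z, z^m * conj (z^n) ∂(bergmanMeasure α) = 0 := by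
  set I := ∫ z, z^m * conj (z^n) ∂(bergmanMeasure α) with hI
  have h : ∀ c : ℂ, ‖c‖ = 1 → I = c^m * conj (c^n) * I := by
    intro c hc
    have h1 := (berg_rot α hc).integral_comp (berg_rotMeas hc) (fun z => z^m * conj (z^n))
    rw [← hI] at h1
    conv_lhs => rw [← h1]
    rw [hI, ← integral_const_mul]
    congr 1
    ext z
    simp only [mul_pow, map_mul]; ring
  obtain ⟨c, hc, hce⟩ : ∃ c : ℂ, ‖c‖ = 1 ∧ c = Complex.exp Complex.I :=
    ⟨_, by simpa using Complex.norm_exp_ofReal_mul_I 1, rfl⟩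
  have h2 := h c hc
  have h3 : c^m * conj (c^n) ≠ 1 := by
    intro h4
    have h5 : c^m = c^n := by
      have h6 : conj (c^n) * c^n = 1 := by
        rw [← Complex.normSq_eq_conj_mul_self, Complex.normSq_eq_norm_sq]; simp [hc]
      calc _ = (c^m * conj (c^n)) * c^n := by
            rw [mul_assoc, h6, mul_one]
        _ = _ := by rw [h4, one_mul]
    rw [hce, ← Complex.exp_nat_mul, ← Complex.exp_nat_mul, Complex.exp_eq_exp_iff_exists_int] at h5
    obtain ⟨k, hk⟩ := h5
    have h7 := congrArg Complex.im hk
    simp at h7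
    rcases eq_or_ne k 0 with rfl | hk0
    · simp at h7; exact hmn h7
    · apply irrational_pi
      refine ⟨((m:ℚ) - n)/(2*k), ?_⟩
      have : (k:ℝ) ≠ 0 := by exact_mod_cast hk0
      push_cast
      field_simp
      linarith
  by_contra hne
  apply h3
  have : I * (c^m * conj (c^n) - 1) = 0 := by
    linear_combination -h2
  rcases mul_eq_zero.1 this with h | h
  · exact absurd h hne
  · linear_combination h

lemma berg_diag {α : ℝ} (hα : 1 < α) (n : ℕ) :
    ∫ z, z^n * conj (z^n) ∂(bergmanMeasure α) = bw α n := by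
  rw [← integral_norm_pow hα, ← integral_complex_ofReal]
  congr 1; ext z
  rw [Complex.mul_conj, Complex.normSq_eq_norm_sq]
  push_cast
  rw [norm_pow, pow_mul']; push_cast; ring

open Polynomial in
lemma berg_inner {α : ℝ} (hα : 1 < α) (P Q : ℂ[X]) (N : ℕ) (hP : P.natDegree < N)
    (hQ : Q.natDegree < N) :
    ∫ z, P.eval z * conj (Q.eval z) ∂(bergmanMeasure α) =
      ∑ n ∈ Finset.range N, P.coeff n * conj (Q.coeff n) * bw α n := by
  have h1 : ∀ z : ℂ, P.eval z * conj (Q.eval z) = ∑ m ∈ Finset.range N, ∑ n ∈ Finset.range N,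
      (P.coeff m * conj (Q.coeff n)) * (z^m * conj (z^n)) := by
    intro z
    rw [eval_eq_sum_range' hP, eval_eq_sum_range' hQ, map_sum, Finset.sum_mul_sum]
    refine Finset.sum_congr rfl fun m _ => Finset.sum_congr rfl fun n _ => ?_
    rw [map_mul]; ring
  simp_rw [h1]
  rw [integral_finsetSum _ (fun m _ => berg_integrable hα (by fun_prop))]
  refine Finset.sum_congr rfl fun m hm => ?_
  rw [integral_finsetSum _ (fun m _ => berg_integrable hα (by fun_prop))]
  rw [Finset.sum_eq_single m]
  · rw [integral_const_mul, berg_diag hα]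
  · intro n _ hn
    rw [integral_const_mul, berg_offdiag hn.symm, mul_zero]
  · intro h; exact absurd hm h

open Polynomial in
noncomputable def bS (α : ℝ) (P : ℂ[X]) (s : ℝ) : ℝ :=
  ∑ n ∈ Finset.range (P.natDegree + 1), ‖P.coeff n‖^2 * s^n * bw α n

open Polynomial in
lemma bS_eq' (α : ℝ) (P : ℂ[X]) (s : ℝ) (N : ℕ) (hN : P.natDegree < N) :
    bS α P s = ∑ n ∈ Finset.range N, ‖P.coeff n‖^2 * s^n * bw α n := by
  unfold bS
  apply Finset.sum_subset
  · intro n; simp; omega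
  · intro n _ h
    rw [coeff_eq_zero_of_natDegree_lt (by simpa using h)]; simp

open Polynomial in
lemma berg_norm_sq {α : ℝ} (hα : 1 < α) (P : ℂ[X]) {s : ℝ} (hs : 0 ≤ s) :
    ∫ z, ‖P.eval ((√s : ℂ) * z)‖^2 ∂(bergmanMeasure α) = bS α P s := by
  have h := berg_inner hα (P.comp (C (√s : ℂ) * X)) (P.comp (C (√s : ℂ) * X)) (P.natDegree + 1)
    (by
      apply Nat.lt_succ_of_le
      refine natDegree_comp_le.trans ?_
      have := (natDegree_C_mul_le (√s : ℂ) X).trans natDegree_X_le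
      nlinarith [this]) (by
      apply Nat.lt_succ_of_le
      refine natDegree_comp_le.trans ?_
      have := (natDegree_C_mul_le (√s : ℂ) X).trans natDegree_X_le
      nlinarith [this])
  have h2 : ∀ w : ℂ, w * conj w = ((‖w‖^2 : ℝ) : ℂ) := by
    intro w; rw [Complex.mul_conj, Complex.normSq_eq_norm_sq]
  simp_rw [h2] at h
  rw [integral_complex_ofReal] at h
  have h3 := congrArg Complex.re h
  rw [Complex.ofReal_re] at h3
  simp only [eval_comp, eval_mul, eval_C, eval_X, comp_C_mul_X_coeff] at h3
  rw [h3, bS]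
  rw [Complex.re_sum]
  refine Finset.sum_congr rfl fun n _ => ?_
  rw [← Complex.ofReal_mul, Complex.ofReal_re, norm_mul, norm_pow, mul_pow, ← pow_mul, mul_comm n 2, pow_mul]
  congr 3
  simp [Real.sq_sqrt hs, sq_abs]

open Polynomial in
lemma berg_norm_sq_one {α : ℝ} (hα : 1 < α) (P : ℂ[X]) :
    ∫ z, ‖P.eval z‖^2 ∂(bergmanMeasure α) = bS α P 1 := by
  simpa using berg_norm_sq hα P (zero_le_one)

lemma coeff_rel {α : ℝ} (hα : 1 < α) (n : ℕ) (c : ℂ) :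
    ‖c‖^2 * (n+1) * bw α (n+1) = 1/α * (‖c * (n+1)‖^2 * bw (α+1) n) := by
  rw [bw_succ hα, norm_mul]
  have : ‖(n+1:ℂ)‖ = n+1 := by
    have := Complex.norm_natCast (n+1); push_cast at this; exact this
  rw [this]
  field_simp

open Polynomial in
lemma bS_deriv {α : ℝ} (hα : 1 < α) (P : ℂ[X]) (s : ℝ) :
    HasDerivAt (bS α P) (1/α * bS (α+1) (derivative P) s) s := by
  have h0 : bS α P = fun s => ∑ n ∈ Finset.range (P.natDegree + 1 + 1), ‖P.coeff n‖^2 * s^n * bw α n :=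
    funext fun s => bS_eq' α P s _ (by omega)
  rw [h0, bS_eq' (α+1) (derivative P) s (P.natDegree + 1) (by have := natDegree_derivative_le P; omega)]
  have h1 : HasDerivAt (fun s : ℝ => ∑ n ∈ Finset.range (P.natDegree + 1 + 1), ‖P.coeff n‖^2 * s^n * bw α n)
     (∑ n ∈ Finset.range (P.natDegree + 1 + 1), ‖P.coeff n‖^2 * (n * s^(n-1)) * bw α n) s := by
    apply HasDerivAt.fun_sum
    intro n _
    exact ((hasDerivAt_pow n s).const_mul _).mul_const _
  convert h1 using 1
  rw [Finset.sum_range_succ' _ (P.natDegree + 1), Finset.mul_sum]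
  simp only [Nat.cast_zero, zero_mul, mul_zero, add_zero]
  refine Finset.sum_congr rfl fun n _ => ?_
  have := coeff_rel hα n (P.coeff (n+1))
  rw [coeff_derivative]
  push_cast
  linear_combination -s^n * this

open Polynomial in
lemma berg_energy {α : ℝ} (hα : 1 < α) (P : ℂ[X]) :
    ∫ z, (z * (derivative P).eval z * conj (P.eval z)).re ∂(bergmanMeasure α) =
      1/α * bS (α+1) (derivative P) 1 := by
  have h := berg_inner hα (X * derivative P) P (P.natDegree + 1 + 1)
    (by
      have := natDegree_mul_le (p := (X : ℂ[X])) (q := derivative P)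
      have := natDegree_derivative_le P
      have := natDegree_X_le (R := ℂ)
      omega) (by omega)
  have h2 := congrArg Complex.re h
  rw [← RCLike.re_eq_complex_re, ← integral_re (berg_integrable hα (by fun_prop))] at h2
  simp only [eval_mul, eval_X, RCLike.re_eq_complex_re] at h2
  rw [h2, bS_eq' (α+1) (derivative P) 1 (P.natDegree + 1) (by have := natDegree_derivative_le P; omega),
    Finset.sum_range_succ' _ (P.natDegree + 1), Finset.mul_sum]
  simp only [coeff_X_mul_zero, zero_mul, add_zero, coeff_X_mul, Complex.re_sum]
  refine Finset.sum_congr rfl fun n _ => ?_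
  have := coeff_rel hα n (P.coeff (n+1))
  rw [coeff_derivative] 
  rw [one_pow, mul_one, ← this]
  have h3 : P.coeff (n+1) * ((n:ℂ)+1) * conj (P.coeff (n+1)) * (bw α (n+1) : ℂ) = 
    ((‖P.coeff (n+1)‖^2 * (n+1) * bw α (n+1) : ℝ) : ℂ) := by
    have h2 : ∀ w : ℂ, w * conj w = ((‖w‖^2 : ℝ) : ℂ) := by
      intro w; rw [Complex.mul_conj, Complex.normSq_eq_norm_sq]
    have h4 := h2 (P.coeff (n+1))
    push_cast at h4 ⊢
    rw [← h4]; ring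
  rw [h3, Complex.ofReal_re]

open Polynomial in
lemma bS_nonneg {α : ℝ} (hα : 1 < α) (P : ℂ[X]) {s : ℝ} (hs : 0 ≤ s) : 0 ≤ bS α P s :=
  Finset.sum_nonneg fun n _ => mul_nonneg (by positivity) (bw_nonneg hα n)

open Polynomial in
lemma bS_mono {α : ℝ} (hα : 1 < α) (P : ℂ[X]) {s : ℝ} (hs : 0 ≤ s) (hs1 : s ≤ 1) :
    bS α P s ≤ bS α P 1 := by
  unfold bS
  gcongr with n
  exact bw_nonneg hα n

open Polynomial in
lemma bS_anti {α : ℝ} (hα : 1 < α) (P : ℂ[X]) {s : ℝ} (hs : 0 ≤ s) :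
    bS (α+1) P s ≤ bS α P s := by
  unfold bS
  gcongr with n
  exact bw_anti hα n

open Polynomial in
/-- the basic derivative identity -/
lemma berg_poly_deriv {α : ℝ} (hα : 1 < α) (g : ℂ[X]) (Q : ℝ[X]) {s : ℝ} (hs : 0 < s) :
    HasDerivAt (fun s : ℝ => ∫ z, Q.eval (‖g.eval ((√s : ℂ) * z)‖^2) ∂(bergmanMeasure α))
      (1/α * ∫ z, ‖(derivative g).eval ((√s : ℂ) * z)‖^2 *
        (derivative (X * derivative Q)).eval (‖g.eval ((√s : ℂ) * z)‖^2) ∂(bergmanMeasure (α+1))) s := by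
  have hα' : 1 < α + 1 := by linarith
  induction Q using Polynomial.induction_on' with
  | add Q R hQ hR =>
    have := hQ.add hR
    refine (this.congr_of_eventuallyEq (Filter.Eventually.of_forall fun t => ?_)).congr_deriv ?_
    · simp only [eval_add, Pi.add_apply]
      exact integral_add (berg_integrable hα (by fun_prop)) (berg_integrable hα (by fun_prop))
    · simp only [map_add, mul_add, eval_add]
      rw [integral_add (berg_integrable hα' (by fun_prop)) (berg_integrable hα' (by fun_prop)), mul_add]
  | monomial j c =>
    have h1 := (bS_deriv hα (g^j) s).const_mul c
    have h2 : (fun s : ℝ => ∫ z, (monomial j c).eval (‖g.eval ((√s : ℂ) * z)‖^2) ∂(bergmanMeasure α)) =ᶠ[nhds s]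
        fun s => c * bS α (g^j) s := by
      filter_upwards [lt_mem_nhds hs] with t ht
      rw [← berg_norm_sq hα _ ht.le, ← integral_const_mul]
      congr 1; ext z
      rw [eval_monomial, eval_pow, norm_pow]; ring
    refine (h1.congr_of_eventuallyEq h2).congr_deriv ?_
    rw [← berg_norm_sq hα' _ hs.le, mul_left_comm, ← integral_const_mul]
    congr 2; ext z
    rw [derivative_pow]
    simp only [derivative_monomial, eval_mul, norm_mul, mul_pow, eval_pow, norm_pow, eval_C, X_mul_monomial]
    rw [eval_monomial]
    rcases j with _ | j
    · simp
    · simp only [Nat.add_sub_cancel]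
      push_cast
      have : ‖(j+1:ℂ)‖ = j+1 := by
        have := Complex.norm_natCast (j+1); push_cast at this; exact this
      simp only [this]
      ring

lemma berg_gibbs {α : ℝ} (hα : 1 < α) {k ψ : ℂ → ℝ} (hk : Continuous k) (hψ : Continuous ψ)
    (hk0 : ∀ z, 0 ≤ k z) (hψ0 : ∀ z, 0 < ψ z) :
    ∫ z, k z * Real.log (ψ z) ∂(bergmanMeasure α) ≤
      ∫ z, k z * Real.log (k z) ∂(bergmanMeasure α) -
        (∫ z, k z ∂(bergmanMeasure α)) * Real.log (∫ z, k z ∂(bergmanMeasure α)) +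
        (∫ z, k z ∂(bergmanMeasure α)) * Real.log (∫ z, ψ z ∂(bergmanMeasure α)) := by
  haveI := berg_prob hα
  set b := ∫ z, k z ∂(bergmanMeasure α) with hb
  set B := ∫ z, ψ z ∂(bergmanMeasure α) with hB
  have hki : Integrable k (bergmanMeasure α) := berg_integrable hα hk
  have hψi : Integrable ψ (bergmanMeasure α) := berg_integrable hα hψ
  have hb0 : 0 ≤ b := integral_nonneg hk0
  have hB0 : 0 < B := by
    rw [hB, integral_pos_iff_support_of_nonneg (fun z => (hψ0 z).le) hψi]
    have : Function.support ψ = Set.univ := by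
      ext z; simp [(hψ0 z).ne']
    rw [this]; simp
  have hkk : Continuous fun z => k z * Real.log (k z) := Real.continuous_mul_log.comp hk
  have hkl : Continuous fun z => k z * Real.log (ψ z) :=
    hk.mul (hψ.log fun z => (hψ0 z).ne')
  rcases hb0.eq_or_lt with h | h
  · have h0 : k =ᵐ[bergmanMeasure α] 0 := (integral_eq_zero_iff_of_nonneg hk0 hki).1 h.symm
    rw [← h]
    have e1 : ∫ z, k z * Real.log (ψ z) ∂(bergmanMeasure α) = 0 := by
      apply integral_eq_zero_of_ae
      filter_upwards [h0] with z hz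
      simp [hz]
    have e2 : ∫ z, k z * Real.log (k z) ∂(bergmanMeasure α) = 0 := by
      apply integral_eq_zero_of_ae
      filter_upwards [h0] with z hz
      simp [hz]
    rw [e1, e2]; simp
  · have hpt : ∀ z, k z * Real.log (ψ z) ≤ k z * Real.log (k z) +
        ((Real.log B - Real.log b - 1) * k z + b / B * ψ z) := by
      intro z
      rcases (hk0 z).eq_or_lt with h2 | h2
      · rw [← h2]
        have := hψ0 z
        simp only [zero_mul, mul_zero, zero_add]
        positivity
      · have h3 := Real.log_le_sub_one_of_pos (x := ψ z * b / (B * k z)) (by have := hψ0 z; positivity)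
        rw [Real.log_div (by have := hψ0 z; positivity) (by positivity),
          Real.log_mul (hψ0 z).ne' h.ne', Real.log_mul hB0.ne' h2.ne'] at h3
        have h4 := mul_le_mul_of_nonneg_left h3 h2.le
        have h5 : k z * (ψ z * b / (B * k z) - 1) = b / B * ψ z - k z := by
          field_simp
        rw [h5] at h4
        linarith
    calc _ ≤ ∫ z, (k z * Real.log (k z) +
        ((Real.log B - Real.log b - 1) * k z + b / B * ψ z)) ∂(bergmanMeasure α) :=
          integral_mono (berg_integrable hα hkl) (berg_integrable hα (by fun_prop)) hpt
      _ = _ := by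
        rw [integral_add (berg_integrable hα hkk) (berg_integrable hα (by fun_prop)),
          integral_add (berg_integrable hα (by fun_prop)) (berg_integrable hα (by fun_prop)),
          integral_const_mul, integral_const_mul, ← hb, ← hB]
        field_simp
        ring

open Polynomial in
lemma poly_antideriv (P : ℝ[X]) : ∃ Q : ℝ[X], derivative Q = P ∧ Q.eval 0 = 0 := by
  induction P using Polynomial.induction_on' with
  | add P R hP hR =>
    obtain ⟨Q, h1, h2⟩ := hP
    obtain ⟨S, h3, h4⟩ := hR
    exact ⟨Q + S, by simp [h1, h3], by simp [h2, h4]⟩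
  | monomial j c =>
    refine ⟨monomial (j+1) (c / (j+1)), ?_, by simp⟩
    rw [derivative_monomial]
    simp only [add_tsub_cancel_right]
    congr 1
    push_cast
    field_simp

open Polynomial in
lemma poly_antideriv' (P : ℝ[X]) (c : ℝ) : ∃ Q : ℝ[X], derivative Q = P ∧ Q.eval 0 = c := by
  obtain ⟨Q, h1, h2⟩ := poly_antideriv P
  exact ⟨Q + C c, by simp [h1], by simp [h2]⟩

lemma mvt_bound {F G F' G' : ℝ → ℝ} {M δ : ℝ} 
    (hF : ∀ v ∈ Set.Icc 0 M, HasDerivAt F (F' v) v)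
    (hG : ∀ v ∈ Set.Icc 0 M, HasDerivAt G (G' v) v) (h0 : F 0 = G 0)
    (hb : ∀ v ∈ Set.Icc 0 M, |F' v - G' v| ≤ δ) : ∀ v ∈ Set.Icc 0 M, |F v - G v| ≤ δ * M := by
  intro v hv
  have hM : 0 ≤ M := hv.1.trans hv.2
  have hδ : 0 ≤ δ := (abs_nonneg _).trans (hb v hv)
  have := Convex.norm_image_sub_le_of_norm_hasDerivWithin_le (f := fun v => F v - G v)
    (f' := fun v => F' v - G' v) (s := Set.Icc 0 M) (C := δ) (x := 0) (y := v)
    (fun x hx => ((hF x hx).sub (hG x hx)).hasDerivWithinAt) (fun x hx => hb x hx)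
    (convex_Icc 0 M) ⟨le_rfl, hM⟩ hv
  simp only [h0, sub_self, sub_zero, Real.norm_eq_abs] at this
  refine this.trans ?_
  rw [abs_of_nonneg hv.1]
  gcongr
  exact hv.2

open Polynomial in
lemma poly_approx {ε M δ : ℝ} (hε : 0 < ε) (hM : 0 ≤ M) (hδ : 0 < δ) :
    ∃ Q : ℝ[X], (∀ v ∈ Set.Icc 0 M, |Q.eval v - (v+ε) * Real.log (v+ε)| ≤ δ) ∧
      ∀ v ∈ Set.Icc 0 M, (derivative (X * derivative Q)).eval v ≤ 2 + Real.log (v+ε) + δ := by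
  set d := δ / (1 + 2 * M + M^2) with hd
  have hd0 : 0 < d := by positivity
  have hdM : d * (1 + 2 * M + M^2) = δ := by rw [hd]; field_simp
  obtain ⟨P, hP⟩ := exists_polynomial_near_of_continuousOn 0 M (fun v => 1/(v+ε))
    (by
      apply ContinuousOn.div (by fun_prop) (by fun_prop)
      intro x hx; have := hx.1; positivity) d hd0
  obtain ⟨R, hR1, hR2⟩ := poly_antideriv' P (Real.log ε + 1)
  obtain ⟨Q, hQ1, hQ2⟩ := poly_antideriv' R (ε * Real.log ε)
  have hFR : ∀ v ∈ Set.Icc 0 M, |R.eval v - (Real.log (v+ε) + 1)| ≤ d * M := by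
    refine mvt_bound (F := fun v => R.eval v) (G := fun v => Real.log (v+ε) + 1) (F' := fun v => P.eval v) (G' := fun v => 1/(v+ε))
      (fun v hv => ?_) (fun v hv => ?_) ?_ (fun v hv => (hP v hv).le)
    · have := R.hasDerivAt v; rwa [hR1] at this
    · have hv0 := hv.1
      exact (((hasDerivAt_id v).add_const ε).log (by simp; positivity)).add_const 1
    · simp [hR2]
  refine ⟨Q, ?_, ?_⟩
  · intro v hv
    have := mvt_bound (F := fun v => Q.eval v) (G := fun v => (v+ε) * Real.log (v+ε)) (F' := fun v => R.eval v)
      (G' := fun v => Real.log (v+ε) + 1) (δ := d * M) (M := M)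
      (fun v hv => by have := Q.hasDerivAt v; rwa [hQ1] at this)
      (fun v hv => by
        have hv0 := hv.1
        have h1 := (Real.hasDerivAt_mul_log (x := v + ε) (by positivity)).comp v ((hasDerivAt_id v).add_const ε)
        rw [mul_one] at h1
        exact h1) (by simp [hQ2]) hFR v hv
    refine this.trans ?_
    rw [← hdM]
    nlinarith [mul_nonneg hd0.le hM]
  · intro v hv
    have hv0 := hv.1
    have h1 := (abs_le.1 (hFR v hv)).2
    have h2 := (abs_le.1 (hP v hv).le).2
    have h3 : v * (1/(v+ε)) ≤ 1 := by
      rw [mul_one_div, div_le_one (by positivity)]; linarith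
    have h4 := mul_le_mul_of_nonneg_left h2 hv0
    have h5 : v * d ≤ M * d := by gcongr; exact hv.2
    simp only [derivative_mul, derivative_X, hQ1, hR1, eval_add, eval_mul, eval_one, eval_X]
    rw [← hdM]
    nlinarith [mul_nonneg hd0.le (sq_nonneg M), mul_nonneg hd0.le hM]

open Polynomial in
lemma berg_poly_cont {α : ℝ} (hα : 1 < α) (g : ℂ[X]) (Q : ℝ[X]) :
    ContinuousOn (fun s : ℝ => ∫ z, Q.eval (‖g.eval ((√s : ℂ) * z)‖^2) ∂(bergmanMeasure α))
      (Set.Ici 0) := by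
  induction Q using Polynomial.induction_on' with
  | add Q R hQ hR =>
    refine (hQ.add hR).congr fun t _ => ?_
    simp only [eval_add, Pi.add_apply]
    exact integral_add (berg_integrable hα (by fun_prop)) (berg_integrable hα (by fun_prop))
  | monomial j c =>
    have h1 : Continuous fun s => c * bS α (g^j) s := by unfold bS; fun_prop
    refine h1.continuousOn.congr fun t ht => ?_
    simp only
    rw [← berg_norm_sq hα _ ht, ← integral_const_mul]
    congr 1; ext z
    rw [eval_monomial, eval_pow, norm_pow]; ring

open Polynomial in
lemma bS_comp {α : ℝ} (hα : 1 < α) (g : ℂ[X]) {s : ℝ} (hs : 0 ≤ s) :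
    bS α (g.comp (C (√s : ℂ) * X)) 1 = bS α g s := by
  rw [← berg_norm_sq hα g hs, ← berg_norm_sq_one hα]
  simp

open Polynomial in
lemma bS_comp_deriv {α : ℝ} (hα : 1 < α) (g : ℂ[X]) {s : ℝ} (hs : 0 ≤ s) :
    bS α (derivative (g.comp (C (√s : ℂ) * X))) 1 = s * bS α (derivative g) s := by
  rw [← berg_norm_sq hα _ hs, ← berg_norm_sq_one hα, ← integral_const_mul]
  congr 1; ext z
  rw [derivative_comp]
  simp only [derivative_C_mul, derivative_X, mul_one, eval_mul, eval_C, eval_comp, eval_X, norm_mul, mul_pow]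
  congr 1
  simp [Real.sq_sqrt hs, sq_abs]

open Polynomial in
def LSp (α : ℝ) (g : ℂ[X]) : Prop :=
  ∫ z, ‖g.eval z‖^2 * Real.log (‖g.eval z‖^2) ∂(bergmanMeasure α) ≤
    1/α * bS (α+1) (derivative g) 1 + bS α g 1 * Real.log (bS α g 1)

open Polynomial in
lemma poly_bdd (g : ℂ[X]) : ∃ M : ℝ, 0 ≤ M ∧ ∀ z ∈ closedBall (0:ℂ) 1, ‖g.eval z‖^2 ≤ M := by
  obtain ⟨M, hM⟩ := (isCompact_closedBall (0:ℂ) 1).exists_bound_of_continuousOn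
    (f := fun z => ‖g.eval z‖^2) (by fun_prop)
  refine ⟨M, ?_, fun z hz => ?_⟩
  · exact (norm_nonneg _).trans (hM 0 (by simp))
  · exact (le_abs_self _).trans (hM z hz)

lemma sqrt_mul_mem {s : ℝ} (h1 : s ≤ 1) {z : ℂ} (hz : z ∈ ball (0:ℂ) 1) :
    (√s : ℂ) * z ∈ closedBall (0:ℂ) 1 := by
  rw [mem_ball_zero_iff] at hz
  rw [mem_closedBall_zero_iff, norm_mul, Complex.norm_real, Real.norm_eq_abs, abs_of_nonneg (Real.sqrt_nonneg _)]
  have : √s ≤ 1 := Real.sqrt_le_one.2 h1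
  exact mul_le_one₀ this (norm_nonneg _) hz.le

open Polynomial in
lemma ls_key {α ε : ℝ} (hα : 1 < α) (hε : 0 < ε) (g : ℂ[X]) {s : ℝ} (hs : 0 < s)
    (IH : LSp (α+1) ((derivative g).comp (C (√s : ℂ) * X))) :
    ∫ z, ‖(derivative g).eval ((√s : ℂ) * z)‖^2 * Real.log (‖g.eval ((√s : ℂ) * z)‖^2 + ε)
      ∂(bergmanMeasure (α+1)) ≤
    1/(α+1) * (s * bS (α+1+1) (derivative (derivative g)) s) +
      bS (α+1) (derivative g) s * Real.log (bS α g s + ε) := by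
  have hα' : 1 < α + 1 := by linarith
  have hα'' : 1 < α + 1 + 1 := by linarith
  have := berg_prob hα'
  have h1 := berg_gibbs hα' (k := fun z => ‖(derivative g).eval ((√s : ℂ) * z)‖^2)
    (ψ := fun z => ‖g.eval ((√s : ℂ) * z)‖^2 + ε) (by fun_prop) (by fun_prop)
    (fun z => by positivity) (fun z => by positivity)
  rw [integral_add (berg_integrable hα' (by fun_prop)) (berg_integrable hα' (by fun_prop)),
    berg_norm_sq hα' _ hs.le, berg_norm_sq hα' _ hs.le] at h1
  simp only [integral_const, probReal_univ, one_smul] at h1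
  unfold LSp at IH
  rw [bS_comp_deriv hα'' _ hs.le, bS_comp hα' _ hs.le] at IH
  simp only [eval_comp, eval_mul, eval_C, eval_X] at IH
  have h2 : bS (α+1) (derivative g) s * Real.log (bS (α+1) g s + ε) ≤
      bS (α+1) (derivative g) s * Real.log (bS α g s + ε) := by
    have := bS_nonneg hα' (derivative g) hs.le
    have := bS_nonneg hα' g hs.le
    have := bS_anti hα g hs.le
    gcongr
  linarith

open Polynomial in
lemma ls_step_eps {α ε δ : ℝ} (hα : 1 < α) (hε : 0 < ε) (hδ : 0 < δ) (g : ℂ[X])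
    (IH : ∀ s : ℝ, 0 < s → LSp (α+1) ((derivative g).comp (C (√s : ℂ) * X))) :
    ∫ z, (‖g.eval z‖^2 + ε) * Real.log (‖g.eval z‖^2 + ε) ∂(bergmanMeasure α) ≤
    1/α * bS (α+1) (derivative g) 1 + (bS α g 1 + ε) * Real.log (bS α g 1 + ε) +
      (δ + δ + δ * (1/α * bS (α+1) (derivative g) 1)) := by
  have hα0 : 0 < α := by linarith
  have hα' : 1 < α + 1 := by linarith
  have := berg_prob hα
  obtain ⟨M, hM0, hM⟩ := poly_bdd g
  obtain ⟨Q, hQ1, hQ2⟩ := poly_approx hε hM0 hδ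
  set K := δ * (1/α * bS (α+1) (derivative g) 1) with hK
  set D : ℝ → ℝ := fun s => 1/α * (s * bS (α+1) (derivative g) s) +
    (bS α g s + ε) * Real.log (bS α g s + ε) -
      (∫ z, Q.eval (‖g.eval ((√s : ℂ) * z)‖^2) ∂(bergmanMeasure α)) + K * s with hD
  have hcS : ∀ (β : ℝ) (P : ℂ[X]), Continuous (bS β P) := fun β P => by unfold bS; fun_prop
  have hDd : ∀ s ∈ Set.Ioo (0:ℝ) 1, HasDerivAt D
      (1/α * (bS (α+1) (derivative g) s + s * (1/(α+1) * bS (α+1+1) (derivative (derivative g)) s)) +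
       (Real.log (bS α g s + ε) + 1) * (1/α * bS (α+1) (derivative g) s) -
       (1/α * ∫ z, ‖(derivative g).eval ((√s : ℂ) * z)‖^2 *
        (derivative (X * derivative Q)).eval (‖g.eval ((√s : ℂ) * z)‖^2) ∂(bergmanMeasure (α+1))) + K) s := by
    intro s hs
    have ha := bS_deriv hα g s
    have hb := bS_deriv hα' (derivative g) s
    have hn := bS_nonneg hα g hs.1.le
    have h1 := ((hasDerivAt_id s).mul hb).const_mul (1/α)
    have h2 := (Real.hasDerivAt_mul_log (x := bS α g s + ε) (by positivity)).comp s (ha.add_const ε)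
    have h3 := berg_poly_deriv hα g Q hs.1
    have h4 := (hasDerivAt_id s).const_mul K
    have h5 := ((h1.add h2).sub h3).add h4
    refine h5.congr_deriv ?_
    simp
  have hDc : ContinuousOn D (Set.Icc 0 1) := by
    have h1 := (berg_poly_cont hα g Q).mono (fun x (hx : x ∈ Set.Icc (0:ℝ) 1) => Set.mem_Ici.2 hx.1)
    have c1 := hcS α g
    have c2 := hcS (α+1) (derivative g)
    have c3 : Continuous fun s => (bS α g s + ε) * Real.log (bS α g s + ε) :=
      Real.continuous_mul_log.comp (c1.add continuous_const)
    exact (((by fun_prop : Continuous fun s => 1/α * (s * bS (α+1) (derivative g) s) +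
    (bS α g s + ε) * Real.log (bS α g s + ε)).continuousOn.sub h1).add (by fun_prop))
  have hmono : MonotoneOn D (Set.Icc 0 1) := by
    apply monotoneOn_of_deriv_nonneg (convex_Icc 0 1) hDc
    · rw [interior_Icc]
      exact fun s hs => (hDd s hs).differentiableAt.differentiableWithinAt
    · rw [interior_Icc]
      intro s hs
      rw [(hDd s hs).deriv]
      have k1 := ls_key hα hε g hs.1 (IH s hs.1)
      have clog : Continuous fun z => Real.log (‖g.eval ((√s : ℂ) * z)‖^2 + ε) :=
        Continuous.log (by fun_prop) (fun z => by positivity)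
      have k2 : ∫ z, ‖(derivative g).eval ((√s : ℂ) * z)‖^2 *
        (derivative (X * derivative Q)).eval (‖g.eval ((√s : ℂ) * z)‖^2) ∂(bergmanMeasure (α+1)) ≤
        ∫ z, ((2 + δ) * ‖(derivative g).eval ((√s : ℂ) * z)‖^2 +
          ‖(derivative g).eval ((√s : ℂ) * z)‖^2 * Real.log (‖g.eval ((√s : ℂ) * z)‖^2 + ε))
          ∂(bergmanMeasure (α+1)) := by
        apply integral_mono_ae (berg_integrable hα' (by fun_prop)) (berg_integrable hα' (by fun_prop))
        filter_upwards [berg_ae_ball (α+1)] with z hz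
        have h1 := hQ2 (‖g.eval ((√s : ℂ) * z)‖^2) ⟨by positivity, hM _ (sqrt_mul_mem hs.2.le hz)⟩
        have h2 := mul_le_mul_of_nonneg_left h1 (sq_nonneg ‖(derivative g).eval ((√s : ℂ) * z)‖)
        linarith
      rw [integral_add (berg_integrable hα' (by fun_prop)) (berg_integrable hα' (by fun_prop)),
        integral_const_mul, berg_norm_sq hα' _ hs.1.le] at k2
      have k3 := bS_mono hα' (derivative g) hs.1.le hs.2.le
      have k4 := mul_le_mul_of_nonneg_left k3 hδ.le
      have k5 : 0 ≤ 1/α * (bS (α+1) (derivative g) s + s * (1/(α+1) * bS (α+1+1) (derivative (derivative g)) s)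
        + (Real.log (bS α g s + ε) + 1) * bS (α+1) (derivative g) s
        - (∫ z, ‖(derivative g).eval ((√s : ℂ) * z)‖^2 *
        (derivative (X * derivative Q)).eval (‖g.eval ((√s : ℂ) * z)‖^2) ∂(bergmanMeasure (α+1)))
        + δ * bS (α+1) (derivative g) 1) := by
        apply mul_nonneg (by positivity)
        linarith
      rw [hK]
      linarith
  have h01 := hmono (Set.left_mem_Icc.2 zero_le_one) (Set.right_mem_Icc.2 zero_le_one) zero_le_one
  have e0 : bS α g 0 = ‖g.eval 0‖^2 := by
    rw [← berg_norm_sq hα g le_rfl]; simp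
  have d0 : -δ ≤ D 0 := by
    have := (abs_le.1 (hQ1 (‖g.eval 0‖^2) ⟨by positivity, hM 0 (by simp)⟩)).2
    simp only [hD, e0]
    simp
    linarith
  have d1 : ∫ z, (‖g.eval z‖^2 + ε) * Real.log (‖g.eval z‖^2 + ε) ∂(bergmanMeasure α) - δ ≤
      ∫ z, Q.eval (‖g.eval z‖^2) ∂(bergmanMeasure α) := by
    have c3 : Continuous fun z => (‖g.eval z‖^2 + ε) * Real.log (‖g.eval z‖^2 + ε) :=
      Real.continuous_mul_log.comp (by fun_prop)
    have : ∫ z, ((‖g.eval z‖^2 + ε) * Real.log (‖g.eval z‖^2 + ε) - δ) ∂(bergmanMeasure α) ≤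
      ∫ z, Q.eval (‖g.eval z‖^2) ∂(bergmanMeasure α) := by
      apply integral_mono_ae (berg_integrable hα (by fun_prop)) (berg_integrable hα (by fun_prop))
      filter_upwards [berg_ae_ball α] with z hz
      have := (abs_le.1 (hQ1 (‖g.eval z‖^2) ⟨by positivity, hM z (ball_subset_closedBall hz)⟩)).1
      linarith
    rw [integral_sub (berg_integrable hα c3) (berg_integrable hα (by fun_prop))] at this
    simpa using this
  have d2 : D 1 = 1/α * bS (α+1) (derivative g) 1 + (bS α g 1 + ε) * Real.log (bS α g 1 + ε) -
      ∫ z, Q.eval (‖g.eval z‖^2) ∂(bergmanMeasure α) + K := by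
    simp [hD]
  linarith

lemma xlogx_superadd {v ε : ℝ} (hv : 0 ≤ v) (hε : 0 < ε) :
    v * Real.log v + ε * Real.log ε ≤ (v+ε) * Real.log (v+ε) := by
  have h2 : ε * Real.log ε ≤ ε * Real.log (v+ε) := by
    gcongr; linarith
  have h1 : v * Real.log v ≤ v * Real.log (v+ε) := by
    rcases hv.eq_or_lt with h | h
    · simp [← h]
    · gcongr; linarith
  linarith

open Polynomial in
lemma ls_step {α : ℝ} (hα : 1 < α) (g : ℂ[X])
    (IH : ∀ s : ℝ, 0 < s → LSp (α+1) ((derivative g).comp (C (√s : ℂ) * X))) : LSp α g := by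
  have := berg_prob hα
  have hα0 : 0 < α := by linarith
  have hα' : 1 < α + 1 := by linarith
  have hb := bS_nonneg hα' (derivative g) zero_le_one
  have c0 : Continuous fun z => ‖g.eval z‖^2 * Real.log (‖g.eval z‖^2) :=
    Real.continuous_mul_log.comp (by fun_prop)
  have h1 : ∀ ε : ℝ, 0 < ε → ∫ z, ‖g.eval z‖^2 * Real.log (‖g.eval z‖^2) ∂(bergmanMeasure α) ≤
     1/α * bS (α+1) (derivative g) 1 + (bS α g 1 + ε) * Real.log (bS α g 1 + ε) - ε * Real.log ε := by
    intro ε hε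
    have c3 : Continuous fun z => (‖g.eval z‖^2 + ε) * Real.log (‖g.eval z‖^2 + ε) :=
      Real.continuous_mul_log.comp (by fun_prop)
    have a1 : ∫ z, (‖g.eval z‖^2 + ε) * Real.log (‖g.eval z‖^2 + ε) ∂(bergmanMeasure α) ≤
      1/α * bS (α+1) (derivative g) 1 + (bS α g 1 + ε) * Real.log (bS α g 1 + ε) := by
      apply le_of_forall_pos_le_add
      intro η hη
      set B := 1/α * bS (α+1) (derivative g) 1 with hB
      have hB0 : 0 ≤ B := by positivity
      have := ls_step_eps hα hε (δ := η / (2 + B)) (by positivity) g IH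
      rw [← hB] at this
      have e : η / (2 + B) + η / (2 + B) + η / (2 + B) * B = η := by field_simp; ring
      rwa [e] at this
    have a2 : ∫ z, (‖g.eval z‖^2 * Real.log (‖g.eval z‖^2) + ε * Real.log ε) ∂(bergmanMeasure α) ≤
       ∫ z, (‖g.eval z‖^2 + ε) * Real.log (‖g.eval z‖^2 + ε) ∂(bergmanMeasure α) :=
      integral_mono (berg_integrable hα (by fun_prop)) (berg_integrable hα c3)
        fun z => xlogx_superadd (by positivity) hε
    rw [integral_add (berg_integrable hα c0) (berg_integrable hα (by fun_prop))] at a2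
    simp only [integral_const, probReal_univ, one_smul] at a2
    linarith
  have h2 : Filter.Tendsto (fun ε : ℝ => 1/α * bS (α+1) (derivative g) 1 +
      (bS α g 1 + ε) * Real.log (bS α g 1 + ε) - ε * Real.log ε) (nhdsWithin 0 (Set.Ioi 0))
      (nhds (1/α * bS (α+1) (derivative g) 1 +
      (bS α g 1 + 0) * Real.log (bS α g 1 + 0) - 0 * Real.log 0)) := by
    have c1 : Continuous fun ε => (bS α g 1 + ε) * Real.log (bS α g 1 + ε) :=
      Real.continuous_mul_log.comp (by fun_prop)
    have c2 : Continuous fun ε : ℝ => ε * Real.log ε := Real.continuous_mul_log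
    exact (Continuous.tendsto (by fun_prop) 0).mono_left nhdsWithin_le_nhds
  have h3 := ge_of_tendsto h2 (by
    filter_upwards [self_mem_nhdsWithin] with ε hε using h1 ε hε)
  simpa [LSp] using h3

open Polynomial in
lemma ls_poly_aux (n : ℕ) : ∀ {α : ℝ} (_ : 1 < α) (g : ℂ[X]), g.natDegree ≤ n → LSp α g := by
  induction n with
  | zero =>
    intro α hα g hg
    have := berg_prob hα
    obtain ⟨c, rfl⟩ := natDegree_eq_zero.1 (Nat.le_zero.1 hg)
    simp [LSp, bS, bw_zero]
  | succ n ih =>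
    intro α hα g hg
    refine ls_step hα g fun s hs => ih (by linarith) _ ?_
    refine natDegree_comp_le.trans ?_
    have h1 := (natDegree_C_mul_le (√s : ℂ) X).trans natDegree_X_le
    have h2 := natDegree_derivative_le g
    calc _ ≤ (derivative g).natDegree * 1 := Nat.mul_le_mul_left _ h1
      _ ≤ n := by omega

open Polynomial in
lemma ls_poly {α : ℝ} (hα : 1 < α) (g : ℂ[X]) :
    ∫ z, ‖g.eval z‖^2 * Real.log (‖g.eval z‖^2) ∂(bergmanMeasure α) ≤
    ∫ z, (z * (derivative g).eval z * conj (g.eval z)).re ∂(bergmanMeasure α) +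
     (∫ z, ‖g.eval z‖^2 ∂(bergmanMeasure α)) * Real.log (∫ z, ‖g.eval z‖^2 ∂(bergmanMeasure α)) := by
  rw [berg_energy hα, berg_norm_sq_one hα]
  exact ls_poly_aux _ hα g le_rfl

open Filter in
lemma berg_dct {α : ℝ} (hα : 1 < α) {F : ℕ → ℂ → ℝ} {G : ℂ → ℝ} (B : ℝ) (hF : ∀ n, Continuous (F n))
    (hb : ∀ n, ∀ z ∈ ball (0:ℂ) 1, |F n z| ≤ B)
    (hl : ∀ z ∈ ball (0:ℂ) 1, Tendsto (fun n => F n z) atTop (nhds (G z))) :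
    Tendsto (fun n => ∫ z, F n z ∂(bergmanMeasure α)) atTop (nhds (∫ z, G z ∂(bergmanMeasure α))) := by
  have := berg_prob hα
  refine tendsto_integral_of_dominated_convergence (fun _ => B)
    (fun n => (hF n).aestronglyMeasurable) (integrable_const B) (fun n => ?_) ?_
  · filter_upwards [berg_ae_ball α] with z hz using hb n z hz
  · filter_upwards [berg_ae_ball α] with z hz using hl z hz

lemma euler_bound (t : ℂ) (n m : ℕ) (hm : m ≤ n + 1) : ‖(1 + t / (n+1:ℂ))^m‖ ≤ Real.exp ‖t‖ := by
  rw [norm_pow]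
  have hn : ‖(n+1:ℂ)‖ = n+1 := by
    have := Complex.norm_natCast (n+1); push_cast at this; exact this
  have h1 : ‖1 + t / (n+1:ℂ)‖ ≤ Real.exp (‖t‖/(n+1)) := by
    refine (norm_add_le _ _).trans ?_
    rw [norm_one, norm_div, hn]
    have := Real.add_one_le_exp (‖t‖/((n:ℝ)+1))
    linarith
  calc _ ≤ (Real.exp (‖t‖/(n+1)))^m := by gcongr
    _ = Real.exp (m * (‖t‖/(n+1))) := by rw [← Real.exp_nat_mul]
    _ ≤ Real.exp ‖t‖ := by
      apply Real.exp_le_exp.2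
      have hm' : (m:ℝ) ≤ n+1 := by exact_mod_cast hm
      rw [mul_div_assoc', div_le_iff₀ (by positivity)]
      nlinarith [norm_nonneg t]

open Filter in
lemma euler_lim (t : ℂ) : Tendsto (fun n : ℕ => (1 + t / (n+1:ℂ))^(n+1)) atTop (nhds (Complex.exp t)) := by
  have := (Complex.tendsto_one_add_div_pow_exp t).comp (tendsto_add_atTop_nat 1)
  refine this.congr fun n => ?_
  simp

open Filter in
lemma euler_lim' (t : ℂ) : Tendsto (fun n : ℕ => (1 + t / (n+1:ℂ))^n) atTop (nhds (Complex.exp t)) := by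
  have h0 : Tendsto (fun n : ℕ => 1 + t / (n+1:ℂ)) atTop (nhds 1) := by
    have h := (tendsto_one_div_add_atTop_nhds_zero_nat (𝕜 := ℂ)).const_mul t |>.const_add 1
    simpa [div_eq_mul_inv] using h
  have h1 := (euler_lim t).div h0 one_ne_zero
  rw [div_one] at h1
  refine h1.congr' ?_
  filter_upwards [h0.eventually_ne one_ne_zero] with n hn
  simp only [Pi.div_apply]
  rw [pow_succ, mul_div_assoc, div_self hn, mul_one]

open Polynomial Filter in
lemma ls_exp {α : ℝ} (hα : 1 < α) (T : ℂ[X]) :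
    ∫ z, Real.exp (2 * (T.eval z).re) * (2 * (T.eval z).re) ∂(bergmanMeasure α) ≤
    ∫ z, Real.exp (2 * (T.eval z).re) * (z * (derivative T).eval z).re ∂(bergmanMeasure α) +
     (∫ z, Real.exp (2 * (T.eval z).re) ∂(bergmanMeasure α)) *
       Real.log (∫ z, Real.exp (2 * (T.eval z).re) ∂(bergmanMeasure α)) := by
  obtain ⟨B, hB⟩ := (isCompact_closedBall (0:ℂ) 1).exists_bound_of_continuousOn
    (f := fun z => T.eval z) (by fun_prop)
  obtain ⟨B', hB'⟩ := (isCompact_closedBall (0:ℂ) 1).exists_bound_of_continuousOn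
    (f := fun z => (derivative T).eval z) (by fun_prop)
  have hB0 : 0 ≤ B' := (norm_nonneg _).trans (hB' 0 (by simp))
  obtain ⟨L, hL⟩ := (isCompact_Icc (a := (0:ℝ)) (b := Real.exp B ^ 2)).exists_bound_of_continuousOn
    (f := fun v => v * Real.log v) Real.continuous_mul_log.continuousOn
  set g : ℕ → ℂ[X] := fun n => (1 + C (1/(n+1:ℂ)) * T)^(n+1) with hg
  have hge : ∀ n z, (g n).eval z = (1 + T.eval z / (n+1:ℂ))^(n+1) := by
    intro n z; simp [hg]; ring
  have hgd : ∀ n z, (derivative (g n)).eval z = (derivative T).eval z * (1 + T.eval z / (n+1:ℂ))^n := by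
    intro n z
    have : (n+1:ℂ) ≠ 0 := by exact_mod_cast Nat.succ_ne_zero n
    simp only [hg, derivative_pow_succ, derivative_add, derivative_one, derivative_C_mul, eval_mul, eval_pow,
      eval_add, eval_C, eval_one, zero_add]
    field_simp
  have bd : ∀ n m : ℕ, m ≤ n+1 → ∀ z ∈ ball (0:ℂ) 1, ‖(1 + T.eval z / (n+1:ℂ))^m‖ ≤ Real.exp B := fun n m hm z hz =>
    (euler_bound _ n m hm).trans (Real.exp_le_exp.2 (hB z (ball_subset_closedBall hz)))
  have nexp : ∀ z, ‖Complex.exp (T.eval z)‖^2 = Real.exp (2 * (T.eval z).re) := by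
    intro z; rw [Complex.norm_exp, ← Real.exp_nat_mul]; simp
  have lim1 : ∀ z, Tendsto (fun n => ‖(g n).eval z‖^2) atTop (nhds (Real.exp (2 * (T.eval z).re))) := by
    intro z
    rw [← nexp]
    simp only [hge]
    exact (euler_lim _).norm.pow 2
  have b1 : ∀ n, ∀ z ∈ ball (0:ℂ) 1, ‖(g n).eval z‖^2 ≤ Real.exp B ^ 2 := by
    intro n z hz
    rw [hge]
    have := bd n (n+1) le_rfl z hz
    gcongr
  have t1 := berg_dct hα (F := fun n z => ‖(g n).eval z‖^2) (Real.exp B ^ 2) (fun n => by fun_prop)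
    (fun n z hz => by rw [abs_of_nonneg (by positivity)]; exact b1 n z hz) (fun z _ => lim1 z)
  have t2 := berg_dct hα (F := fun n z => ‖(g n).eval z‖^2 * Real.log (‖(g n).eval z‖^2)) 
    (G := fun z => Real.exp (2 * (T.eval z).re) * (2 * (T.eval z).re)) L
    (fun n => Real.continuous_mul_log.comp (by fun_prop))
    (fun n z hz => hL _ ⟨by positivity, b1 n z hz⟩) (fun z _ => by
      have := (Real.continuous_mul_log.tendsto _).comp (lim1 z)
      rw [Real.log_exp] at this
      exact this)
  have t3 := berg_dct hα (F := fun n z => (z * (derivative (g n)).eval z * conj ((g n).eval z)).re) 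
    (G := fun z => Real.exp (2 * (T.eval z).re) * (z * (derivative T).eval z).re) (B' * Real.exp B * Real.exp B)
    (fun n => by fun_prop)
    (fun n z hz => by
      refine (Complex.abs_re_le_norm _).trans ?_
      rw [norm_mul, norm_mul, RCLike.norm_conj, hge, hgd, norm_mul]
      have h1 := bd n (n+1) le_rfl z hz
      have h2 := bd n n (by omega) z hz
      have h3 := hB' z (ball_subset_closedBall hz)
      have h4 : ‖z‖ ≤ 1 := (mem_ball_zero_iff.1 hz).le
      calc _ ≤ 1 * (B' * Real.exp B) * Real.exp B := by gcongr
        _ = _ := by ring) (fun z _ => by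
      have e : Real.exp (2 * (T.eval z).re) * (z * (derivative T).eval z).re =
        (z * ((derivative T).eval z * Complex.exp (T.eval z)) * conj (Complex.exp (T.eval z))).re := by
        rw [← nexp, ← Complex.re_ofReal_mul, ← Complex.normSq_eq_norm_sq, ← Complex.mul_conj]
        congr 1; ring
      rw [e]
      simp only [hge, hgd]
      have c1 := euler_lim (T.eval z)
      have c2 := euler_lim' (T.eval z)
      exact (Complex.continuous_re.tendsto _).comp (((c2.const_mul _).const_mul z).mul
        ((Complex.continuous_conj.tendsto _).comp c1)))
  have t4 := t3.add ((Real.continuous_mul_log.tendsto _).comp t1)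
  exact le_of_tendsto_of_tendsto' t2 t4 fun n => ls_poly hα (g n)

lemma sqrt_div_deriv {p x : ℝ} (hp : 0 < p) (hx : 0 < x) :
    HasDerivAt (fun x => √(p/x)) (-(1/2) * √(p/x) / x) x := by
  have h1 := ((hasDerivAt_inv hx.ne').const_mul p).sqrt (by positivity)
  simp only [← div_eq_mul_inv] at h1
  refine h1.congr_deriv ?_
  have h2 : √(p/x) ≠ 0 := by positivity
  have h3 : √(p/x)^2 = p/x := Real.sq_sqrt (by positivity)
  field_simp
  rw [h3]
  field_simp

open Polynomial in
noncomputable def hU (p : ℝ) (T : ℂ[X]) (x : ℝ) (z : ℂ) : ℝ := x * (T.eval ((√(p/x) : ℝ) * z)).re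

open Polynomial in
noncomputable def hV (p : ℝ) (T : ℂ[X]) (x : ℝ) (z : ℂ) : ℝ :=
  Real.exp (hU p T x z) * ((T.eval ((√(p/x) : ℝ) * z)).re -
    1/2 * (((√(p/x) : ℝ) * z) * (derivative T).eval ((√(p/x) : ℝ) * z)).re)

open Polynomial in
lemma hU_deriv {p x : ℝ} (hp : 0 < p) (hx : 0 < x) (T : ℂ[X]) (z : ℂ) :
    HasDerivAt (fun x => Real.exp (hU p T x z)) (hV p T x z) x := by
  have h1 : HasDerivAt (fun x : ℝ => ((√(p/x) : ℝ) : ℂ) * z) (((-(1/2) * √(p/x) / x : ℝ) : ℂ) * z) x :=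
    (sqrt_div_deriv hp hx).ofReal_comp.mul_const z
  have h2 := (T.hasDerivAt (((√(p/x) : ℝ) : ℂ) * z)).comp x h1
  have h3 : HasDerivAt (fun x : ℝ => (T.eval (((√(p/x) : ℝ) : ℂ) * z)).re) _ x :=
    Complex.reCLM.hasFDerivAt.comp_hasDerivAt x h2
  have h4 := ((hasDerivAt_id x).mul h3).exp
  refine h4.congr_deriv ?_
  unfold hV hU
  simp only [id, Complex.reCLM_apply, Pi.mul_apply]
  congr 1
  have e : (derivative T).eval (((√(p/x) : ℝ) : ℂ) * z) * (((-(1/2) * √(p/x) / x : ℝ) : ℂ) * z) =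
    ((-(1/2) / x : ℝ) : ℂ) * (((√(p/x) : ℝ) * z) * (derivative T).eval ((√(p/x) : ℝ) * z)) := by
    push_cast; ring
  rw [e, Complex.re_ofReal_mul]
  field_simp
  ring

open Polynomial in
lemma hZ_deriv {α p x : ℝ} (hα : 1 < α) (hp : 0 < p) (hx : 0 < x) (T : ℂ[X]) :
    HasDerivAt (fun x => ∫ z, Real.exp (hU p T x z) ∂(bergmanMeasure α))
      (∫ z, hV p T x z ∂(bergmanMeasure α)) x := by
  have := berg_prob hα
  have cU : ∀ x, Continuous fun z => Real.exp (hU p T x z) := fun x => by unfold hU; fun_prop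
  have cV : ∀ x, Continuous (hV p T x) := fun x => by unfold hV hU; fun_prop
  have cc : ContinuousOn (fun y : ℝ × ℂ => hV p T y.1 y.2) (Set.Icc (x/2) (2*x) ×ˢ closedBall 0 1) := by
    have h1 : ContinuousOn (fun y : ℝ × ℂ => ((√(p/y.1) : ℝ) : ℂ)) (Set.Icc (x/2) (2*x) ×ˢ closedBall 0 1) := by
      refine Complex.continuous_ofReal.comp_continuousOn (Real.continuous_sqrt.comp_continuousOn ?_)
      refine ContinuousOn.div (by fun_prop) (by fun_prop) ?_
      rintro ⟨a, b⟩ ⟨h, -⟩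
      have := h.1
      simp only at this ⊢
      exact (by linarith : (0:ℝ) < a).ne'
    have h2 : ContinuousOn (fun y : ℝ × ℂ => ((√(p/y.1) : ℝ) : ℂ) * y.2) (Set.Icc (x/2) (2*x) ×ˢ closedBall 0 1) :=
      h1.mul (by fun_prop)
    have h3 : Continuous fun y : ℝ × ℂ => Real.exp (y.1 * (T.eval y.2).re) * ((T.eval y.2).re -
      1/2 * (y.2 * (derivative T).eval y.2).re) := by fun_prop
    exact h3.comp_continuousOn (continuousOn_fst.prodMk h2)
  obtain ⟨B, hB⟩ := (isCompact_Icc.prod (isCompact_closedBall (0:ℂ) 1)).exists_bound_of_continuousOn cc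
  refine (hasDerivAt_integral_of_dominated_loc_of_deriv_le (s := Set.Icc (x/2) (2*x)) (bound := fun _ => B)
    (F := fun x z => Real.exp (hU p T x z)) (F' := fun x z => hV p T x z)
    (Icc_mem_nhds (by linarith) (by linarith))
    (Filter.Eventually.of_forall fun x => (cU x).aestronglyMeasurable) (berg_integrable hα (cU x))
    (cV x).aestronglyMeasurable ?_ (integrable_const B) ?_).2
  · filter_upwards [berg_ae_ball α] with z hz y hy
    exact hB (y, z) ⟨hy, ball_subset_closedBall hz⟩
  · filter_upwards with z y hy
    exact hU_deriv hp (by linarith [hy.1]) T z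

open Polynomial in
lemma hZ_ineq {α p x : ℝ} (hα : 1 < α) (T : ℂ[X]) :
    x * (∫ z, hV p T x z ∂(bergmanMeasure α)) ≤ (∫ z, Real.exp (hU p T x z) ∂(bergmanMeasure α)) *
      Real.log (∫ z, Real.exp (hU p T x z) ∂(bergmanMeasure α)) := by
  have h := ls_exp hα (C ((x/2 : ℝ) : ℂ) * T.comp (C ((√(p/x) : ℝ) : ℂ) * X))
  have e1 : ∀ z, 2 * ((C ((x/2 : ℝ) : ℂ) * T.comp (C ((√(p/x) : ℝ) : ℂ) * X)).eval z).re = hU p T x z := by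
    intro z
    simp only [eval_mul, eval_C, eval_comp, eval_X, Complex.re_ofReal_mul, hU]
    ring
  have e2 : ∀ z, (z * (derivative (C ((x/2 : ℝ) : ℂ) * T.comp (C ((√(p/x) : ℝ) : ℂ) * X))).eval z).re =
     x/2 * (((√(p/x) : ℝ) * z) * (derivative T).eval ((√(p/x) : ℝ) * z)).re := by
    intro z
    rw [← Complex.re_ofReal_mul]
    simp only [derivative_C_mul, derivative_comp, derivative_X, mul_one, eval_mul, eval_C, eval_comp, eval_X]
    congr 1; ring
  simp only [e1, e2] at h
  have c1 : Continuous (hU p T x) := by unfold hU; fun_prop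
  have e3 : x * (∫ z, hV p T x z ∂(bergmanMeasure α)) =
    ∫ z, Real.exp (hU p T x z) * hU p T x z ∂(bergmanMeasure α) -
    ∫ z, Real.exp (hU p T x z) * (x/2 * (((√(p/x) : ℝ) * z) * (derivative T).eval ((√(p/x) : ℝ) * z)).re) ∂(bergmanMeasure α) := by
    rw [← integral_const_mul, ← integral_sub (berg_integrable hα (by fun_prop)) (berg_integrable hα (by fun_prop))]
    congr 1; ext z
    unfold hV hU
    ring
  rw [e3]; linarith

open Polynomial in
lemma hyper_exp {α p q : ℝ} (hα : 1 < α) (hp : 0 < p) (hpq : p < q) (T : ℂ[X]) :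
    (∫ z, Real.exp (q * (T.eval ((√(p/q) : ℝ) * z)).re) ∂(bergmanMeasure α))^(1/q) ≤
    (∫ z, Real.exp (p * (T.eval z).re) ∂(bergmanMeasure α))^(1/p) := by
  have := berg_prob hα
  have hne : bergmanMeasure α ≠ 0 := IsProbabilityMeasure.ne_zero _
  have : NeZero (bergmanMeasure α) := ⟨hne⟩
  set Z : ℝ → ℝ := fun x => ∫ z, Real.exp (hU p T x z) ∂(bergmanMeasure α) with hZ
  have Zpos : ∀ x, 0 < Z x := fun x =>
    integral_exp_pos (berg_integrable hα (by unfold hU; fun_prop))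
  have hd : ∀ x, 0 < x → HasDerivAt (fun x => Real.log (Z x) / x) _ x := fun x hx =>
    ((hZ_deriv hα hp hx T).log (Zpos x).ne').div (hasDerivAt_id x) hx.ne'
  have ha : AntitoneOn (fun x => Real.log (Z x) / x) (Set.Icc p q) := by
    apply antitoneOn_of_deriv_nonpos (convex_Icc p q)
    · exact fun x hx => (hd x (hp.trans_le hx.1)).continuousAt.continuousWithinAt
    · rw [interior_Icc]
      exact fun x hx => (hd x (hp.trans hx.1)).differentiableAt.differentiableWithinAt
    · rw [interior_Icc]
      intro x hx
      have hx0 := hp.trans hx.1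
      rw [(hd x hx0).deriv]
      have h1 := hZ_ineq hα T (p := p) (x := x)
      apply div_nonpos_of_nonpos_of_nonneg _ (by positivity)
      have h2 : (∫ z, hV p T x z ∂(bergmanMeasure α)) / Z x * x ≤ Real.log (Z x) := by
        rw [div_mul_eq_mul_div, div_le_iff₀ (Zpos x)]
        linarith
      simp only [id, mul_one]
      exact sub_nonpos.2 h2
  have h := ha ⟨le_rfl, hpq.le⟩ ⟨hpq.le, le_rfl⟩ hpq.le
  have e1 : ∫ z, Real.exp (p * (T.eval z).re) ∂(bergmanMeasure α) = Z p := by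
    simp [hZ, hU, div_self hp.ne']
  have e2 : ∫ z, Real.exp (q * (T.eval ((√(p/q) : ℝ) * z)).re) ∂(bergmanMeasure α) = Z q := rfl
  rw [e1, e2, Real.rpow_def_of_pos (Zpos q), Real.rpow_def_of_pos (Zpos p)]
  apply Real.exp_le_exp.2
  simpa [div_eq_mul_inv] using h

lemma exists_log_ball {f : ℂ → ℂ} (hf : DifferentiableOn ℂ f (ball (0 : ℂ) 1))
    (hf0 : ∀ z ∈ ball (0 : ℂ) 1, f z ≠ 0) :
    ∃ l : ℂ → ℂ, DifferentiableOn ℂ l (ball (0:ℂ) 1) ∧ ∀ z ∈ ball (0:ℂ) 1, f z = Complex.exp (l z) := by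
  obtain ⟨g, hg⟩ := ((hf.deriv isOpen_ball).div hf hf0).isExactOn_ball
  have hgd : DifferentiableOn ℂ g (ball 0 1) := fun z hz => (hg z hz).differentiableAt.differentiableWithinAt
  have h1 : ∀ z ∈ ball (0:ℂ) 1, HasDerivAt (fun z => f z * Complex.exp (- g z)) 0 z := by
    intro z hz
    have a := (hf.differentiableAt (isOpen_ball.mem_nhds hz)).hasDerivAt
    refine (a.mul (hg z hz).neg.cexp).congr_deriv ?_
    have := hf0 z hz
    simp only [Pi.div_apply]
    field_simp
    ring
  have h2 : ∀ z ∈ ball (0:ℂ) 1, f z * Complex.exp (- g z) = f 0 * Complex.exp (- g 0) := by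
    intro z hz
    exact isOpen_ball.is_const_of_deriv_eq_zero (convex_ball (0:ℂ) 1).isPreconnected
      (fun z hz => (h1 z hz).differentiableAt.differentiableWithinAt) (fun z hz => (h1 z hz).deriv) hz (by simp)
  refine ⟨fun z => g z + Complex.log (f 0 * Complex.exp (- g 0)), hgd.add_const _, fun z hz => ?_⟩
  rw [Complex.exp_add, Complex.exp_log, ← h2 z hz]
  · rw [mul_left_comm, ← Complex.exp_add]; simp
  · exact mul_ne_zero (hf0 0 (by simp)) (Complex.exp_ne_zero _)

lemma berg_aesm (α : ℝ) {E : Type*} [NormedAddCommGroup E] [SecondCountableTopology E] {h : ℂ → E}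
    (hh : ContinuousOn h (ball 0 1)) :
    AEStronglyMeasurable h (bergmanMeasure α) :=
  (hh.aestronglyMeasurable measurableSet_ball).mono_ac (withDensity_absolutelyContinuous _ _)

open Filter in
lemma berg_dct2 {α : ℝ} (hα : 1 < α) {F : ℕ → ℂ → ℝ} {G : ℂ → ℝ} (B : ℝ)
    (hF : ∀ n, ContinuousOn (F n) (ball 0 1))
    (hb : ∀ n, ∀ z ∈ ball (0:ℂ) 1, |F n z| ≤ B)
    (hl : ∀ z ∈ ball (0:ℂ) 1, Tendsto (fun n => F n z) atTop (nhds (G z))) :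
    Tendsto (fun n => ∫ z, F n z ∂(bergmanMeasure α)) atTop (nhds (∫ z, G z ∂(bergmanMeasure α))) := by
  have := berg_prob hα
  refine tendsto_integral_of_dominated_convergence (fun _ => B)
    (fun n => berg_aesm α (hF n)) (integrable_const B) (fun n => ?_) ?_
  · filter_upwards [berg_ae_ball α] with z hz using hb n z hz
  · filter_upwards [berg_ae_ball α] with z hz using hl z hz

lemma real_mul_mem {ρ : ℝ} (h0 : 0 ≤ ρ) (h1 : ρ ≤ 1) {z : ℂ} (hz : z ∈ ball (0:ℂ) 1) :
    (ρ : ℂ) * z ∈ ball (0:ℂ) 1 := by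
  rw [mem_ball_zero_iff] at hz ⊢
  rw [norm_mul, Complex.norm_real, Real.norm_eq_abs, abs_of_nonneg h0]
  nlinarith [norm_nonneg z]

lemma real_mul_mem' {ρ : ℝ} (h0 : 0 ≤ ρ) {z : ℂ} (hz : z ∈ ball (0:ℂ) 1) :
    (ρ : ℂ) * z ∈ closedBall (0:ℂ) ρ := by
  rw [mem_ball_zero_iff] at hz
  rw [mem_closedBall_zero_iff, norm_mul, Complex.norm_real, Real.norm_eq_abs, abs_of_nonneg h0]
  nlinarith [norm_nonneg z]

open Polynomial Filter in
lemma taylor_polys {l : ℂ → ℂ} (hl : DifferentiableOn ℂ l (ball (0:ℂ) 1)) {ρ : ℝ} (h0 : 0 < ρ) (h1 : ρ < 1) :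
    ∃ (T : ℕ → ℂ[X]) (B : ℝ), (∀ n, ∀ z ∈ ball (0:ℂ) 1, ‖(T n).eval z‖ ≤ B) ∧
      ∀ z ∈ ball (0:ℂ) 1, Tendsto (fun n => (T n).eval z) atTop (nhds (l (ρ * z))) := by
  obtain ⟨R, hR1, hR2⟩ := exists_between h1
  have hR0 : 0 < R := h0.trans hR1
  lift R to NNReal using hR0.le
  lift ρ to NNReal using h0.le
  have hps := (hl.mono (closedBall_subset_ball hR2)).hasFPowerSeriesOnBall (c := 0) (by exact_mod_cast hR0)
  set P := cauchyPowerSeries l 0 R with hP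
  have hu := hps.tendstoUniformlyOn (r' := ρ) (by exact_mod_cast hR1)
  obtain ⟨B, hB⟩ := (isCompact_closedBall (0:ℂ) ρ).exists_bound_of_continuousOn
    (f := l) (hl.continuousOn.mono (closedBall_subset_ball h1))
  obtain ⟨N, hN⟩ := eventually_atTop.1 (Metric.tendstoUniformlyOn_iff.1 hu 1 one_pos)
  have hmem : ∀ z ∈ ball (0:ℂ) 1, (((ρ:ℝ):ℂ) * z) ∈ ball (0:ℂ) ρ := by
    intro z hz
    rw [mem_ball_zero_iff] at hz ⊢
    rw [norm_mul, Complex.norm_real, Real.norm_eq_abs, abs_of_nonneg h0.le]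
    nlinarith [norm_nonneg z]
  have hev : ∀ n z, (∑ k ∈ Finset.range n, C (P.coeff k * ((ρ:ℝ):ℂ)^k) * X^k : ℂ[X]).eval z =
      P.partialSum n (((ρ:ℝ):ℂ) * z) := by
    intro n z
    rw [eval_finsetSum, FormalMultilinearSeries.partialSum]
    refine Finset.sum_congr rfl fun k _ => ?_
    rw [FormalMultilinearSeries.apply_eq_pow_smul_coeff]
    simp only [eval_mul, eval_C, eval_pow, eval_X, smul_eq_mul]
    ring
  refine ⟨fun n => ∑ k ∈ Finset.range (n+N), C (P.coeff k * ((ρ:ℝ):ℂ)^k) * X^k, B + 1, ?_, ?_⟩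
  · intro n z hz
    rw [hev]
    have a := hN (n+N) (by omega) _ (hmem z hz)
    rw [zero_add, dist_eq_norm] at a
    have b := hB _ (ball_subset_closedBall (hmem z hz))
    have c := norm_sub_norm_le (P.partialSum (n+N) (((ρ:ℝ):ℂ) * z)) (l (((ρ:ℝ):ℂ) * z))
    rw [norm_sub_rev] at c
    linarith
  · intro z hz
    simp only [hev]
    have a := (hu.tendsto_at (hmem z hz)).comp (tendsto_add_atTop_nat N)
    rw [zero_add] at a
    exact a

lemma norm_exp_rpow (w : ℂ) (q : ℝ) : ‖Complex.exp w‖^q = Real.exp (q * w.re) := by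
  rw [Complex.norm_exp, ← Real.exp_mul, mul_comm]

open Filter in
lemma hyper_rho {α p q : ℝ} (hα : 1 < α) (hp : 0 < p) (hpq : p < q)
    {l : ℂ → ℂ} (hl : DifferentiableOn ℂ l (ball (0:ℂ) 1)) {ρ : ℝ} (h0 : 0 < ρ) (h1 : ρ < 1) :
    (∫ z, Real.exp (q * (l (ρ * ((√(p/q) : ℝ) * z))).re) ∂(bergmanMeasure α))^(1/q) ≤
    (∫ z, Real.exp (p * (l (ρ * z)).re) ∂(bergmanMeasure α))^(1/p) := by
  have hq : 0 < q := hp.trans hpq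
  obtain ⟨T, B, hB, hT⟩ := taylor_polys hl h0 h1
  have hr : √(p/q) ≤ 1 := Real.sqrt_le_one.2 ((div_le_one hq).2 hpq.le)
  have key : ∀ x : ℝ, 0 < x → ∀ s : ℝ, 0 ≤ s → s ≤ 1 →
      Tendsto (fun n => ∫ z, Real.exp (x * ((T n).eval (s * z)).re) ∂(bergmanMeasure α)) atTop
      (nhds (∫ z, Real.exp (x * (l (ρ * (s * z))).re) ∂(bergmanMeasure α))) := by
    intro x hx s hs hs1
    refine berg_dct hα (Real.exp (x * B)) (fun n => by fun_prop) (fun n z hz => ?_) (fun z hz => ?_)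
    · rw [Real.abs_exp]
      have := (Complex.re_le_norm _).trans (hB n _ (real_mul_mem hs hs1 hz))
      gcongr
    · have := hT _ (real_mul_mem hs hs1 hz)
      exact (Real.continuous_exp.tendsto _).comp (((Complex.continuous_re.tendsto _).comp this).const_mul x)
  have t1 := key q hq _ (Real.sqrt_nonneg _) hr
  have t2 := key p hp 1 zero_le_one le_rfl
  simp only [Complex.ofReal_one, one_mul] at t2
  exact le_of_tendsto_of_tendsto' (t1.rpow_const (Or.inr (by positivity)))
    (t2.rpow_const (Or.inr (by positivity))) fun n => hyper_exp hα hp hpq (T n)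

noncomputable def pk (ρ θ : ℝ) : ℝ := (2 * Real.pi)⁻¹ * poissonKernel 0 (ρ : ℂ) (circleMap 0 1 θ)

lemma pk_nonneg {ρ : ℝ} (h0 : 0 < ρ) (h1 : ρ < 1) (θ : ℝ) : 0 ≤ pk ρ θ := by
  unfold pk poissonKernel
  have : ρ^2 ≤ 1 := by nlinarith
  simp only [sub_zero, norm_circleMap_zero, Complex.norm_real, Real.norm_eq_abs, sq_abs, abs_one, one_pow]
  have : 0 ≤ 1 - ρ^2 := by linarith
  positivity

lemma pk_cont {ρ : ℝ} (h0 : 0 < ρ) (h1 : ρ < 1) : Continuous (pk ρ) := by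
  unfold pk poissonKernel
  refine continuous_const.mul (Continuous.div (by fun_prop) (by fun_prop) fun θ => ?_)
  have : circleMap 0 1 θ - 0 - ((ρ:ℂ) - 0) ≠ 0 := by
    intro h
    have h2 : circleMap 0 1 θ = ρ := by linear_combination h
    have h3 := congrArg norm h2
    rw [norm_circleMap_zero, Complex.norm_real, Real.norm_eq_abs, abs_of_pos h0] at h3
    simp at h3; linarith
  positivity

lemma pk_formula {ρ : ℝ} (h0 : 0 < ρ) (h1 : ρ < 1) {H : ℂ → ℂ} (hH : DiffContOnCl ℂ H (ball 0 1)) :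
    H ρ = ∫ θ in Set.Ioc 0 (2 * Real.pi), (pk ρ θ : ℂ) * H (circleMap 0 1 θ) := by
  have hm : (ρ:ℂ) ∈ ball (0:ℂ) 1 := by
    rw [mem_ball_zero_iff, Complex.norm_real, Real.norm_eq_abs, abs_of_pos h0]; exact h1
  rw [← hH.circleAverage_poissonKernel_smul hm, Real.circleAverage_def,
    intervalIntegral.integral_of_le (by positivity), ← integral_smul]
  congr 1; ext θ
  simp [pk]; ring

lemma pk_lint {ρ : ℝ} (h0 : 0 < ρ) (h1 : ρ < 1) :
    ∫⁻ θ in Set.Ioc 0 (2 * Real.pi), ENNReal.ofReal (pk ρ θ) = 1 := by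
  rw [← ofReal_integral_eq_lintegral_ofReal ((pk_cont h0 h1).integrableOn_Ioc)
    (Filter.Eventually.of_forall (pk_nonneg h0 h1))]
  have := pk_formula h0 h1 (H := fun _ => 1) diffContOnCl_const
  simp only [mul_one] at this
  rw [integral_complex_ofReal] at this
  have h2 : ∫ θ in Set.Ioc 0 (2 * Real.pi), pk ρ θ = 1 := by exact_mod_cast this.symm
  rw [h2]; simp

lemma dil_contract {α ρ : ℝ} (hα : 1 < α) (h0 : 0 < ρ) (h1 : ρ < 1) {G : ℂ → ℂ}
    (hG : DifferentiableOn ℂ G (ball (0:ℂ) 1)) :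
    ∫⁻ z, ‖G (ρ * z)‖ₑ ∂(bergmanMeasure α) ≤ ∫⁻ z, ‖G z‖ₑ ∂(bergmanMeasure α) := by
  have := berg_prob hα
  set Φ : ℂ → ENNReal := (ball (0:ℂ) 1).indicator (fun z => ‖G z‖ₑ) with hΦ
  have mΦ : Measurable Φ := by
    have e : Φ = fun z => ‖(ball (0:ℂ) 1).indicator G z‖ₑ := by
      ext z
      simp only [hΦ, Set.indicator]
      split_ifs <;> simp
    rw [e]
    have : Measurable ((ball (0:ℂ) 1).indicator G) := by
      classical
      rw [← Set.piecewise_eq_indicator]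
      exact hG.continuousOn.measurable_piecewise continuousOn_const measurableSet_ball
    exact this.enorm
  have hpt : ∀ z ∈ ball (0:ℂ) 1, ‖G (ρ * z)‖ₑ ≤
      ∫⁻ θ in Set.Ioc 0 (2 * Real.pi), ENNReal.ofReal (pk ρ θ) * Φ (circleMap 0 1 θ * z) := by
    intro z hz
    have hsub : ∀ w ∈ closedBall (0:ℂ) 1, w * z ∈ ball (0:ℂ) 1 := by
      intro w hw
      rw [mem_closedBall_zero_iff] at hw
      rw [mem_ball_zero_iff] at hz ⊢
      rw [norm_mul]
      nlinarith [norm_nonneg z, norm_nonneg w]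
    have hd : DiffContOnCl ℂ (fun w => G (w * z)) (ball 0 1) := by
      apply DifferentiableOn.diffContOnCl
      rw [closure_ball _ one_ne_zero]
      exact hG.comp (by fun_prop) hsub
    have hfo := pk_formula h0 h1 hd
    rw [hfo]
    refine (enorm_integral_le_lintegral_enorm _).trans (le_of_eq ?_)
    congr 1; ext θ
    have hm := hsub (circleMap 0 1 θ) (by simp)
    simp only [hΦ, Set.indicator_of_mem hm]
    rw [enorm_mul]
    congr 1
    rw [← ofReal_norm, Complex.norm_real, Real.norm_eq_abs, abs_of_nonneg (pk_nonneg h0 h1 θ)]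
  calc ∫⁻ z, ‖G (ρ * z)‖ₑ ∂(bergmanMeasure α)
      ≤ ∫⁻ z, (∫⁻ θ in Set.Ioc 0 (2 * Real.pi), ENNReal.ofReal (pk ρ θ) * Φ (circleMap 0 1 θ * z)) ∂(bergmanMeasure α) := by
        apply lintegral_mono_ae
        filter_upwards [berg_ae_ball α] with z hz using hpt z hz
    _ = ∫⁻ θ in Set.Ioc 0 (2 * Real.pi), ∫⁻ z, ENNReal.ofReal (pk ρ θ) * Φ (circleMap 0 1 θ * z) ∂(bergmanMeasure α) := by
        apply lintegral_lintegral_swap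
        apply Measurable.aemeasurable
        have c1 : Measurable fun y : ℂ × ℝ => ENNReal.ofReal (pk ρ y.2) :=
          ENNReal.measurable_ofReal.comp ((pk_cont h0 h1).measurable.comp measurable_snd)
        have c2 : Measurable fun y : ℂ × ℝ => Φ (circleMap 0 1 y.2 * y.1) :=
          mΦ.comp (by fun_prop : Continuous fun y : ℂ × ℝ => circleMap 0 1 y.2 * y.1).measurable
        exact c1.mul c2
    _ = ∫⁻ θ in Set.Ioc 0 (2 * Real.pi), ENNReal.ofReal (pk ρ θ) * ∫⁻ z, Φ z ∂(bergmanMeasure α) := by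
        congr 1; ext θ
        have c3 : Measurable fun z => Φ (circleMap 0 1 θ * z) :=
          mΦ.comp (by fun_prop : Continuous fun z : ℂ => circleMap 0 1 θ * z).measurable
        rw [lintegral_const_mul _ c3]
        congr 1
        exact (berg_rot α (by simp)).lintegral_comp mΦ
    _ = ∫⁻ z, Φ z ∂(bergmanMeasure α) := by
        have c4 : Measurable fun θ => ENNReal.ofReal (pk ρ θ) :=
          ENNReal.measurable_ofReal.comp (pk_cont h0 h1).measurable
        rw [lintegral_mul_const _ c4, pk_lint h0 h1, one_mul]
    _ = _ := by
        apply lintegral_congr_ae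
        filter_upwards [berg_ae_ball α] with z hz
        simp only [hΦ, Set.indicator_of_mem hz]

lemma dil_contract' {α ρ p : ℝ} (hα : 1 < α) (h0 : 0 < ρ) (h1 : ρ < 1) {l : ℂ → ℂ}
    (hl : DifferentiableOn ℂ l (ball (0:ℂ) 1))
    (hi : Integrable (fun z => Real.exp (p * (l z).re)) (bergmanMeasure α)) :
    ∫ z, Real.exp (p * (l (ρ * z)).re) ∂(bergmanMeasure α) ≤
      ∫ z, Real.exp (p * (l z).re) ∂(bergmanMeasure α) := by
  have h := dil_contract hα h0 h1 (G := fun z => Complex.exp ((p:ℂ) * l z)) ((hl.const_mul _).cexp)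
  have e : ∀ w : ℂ, ‖Complex.exp ((p:ℂ) * w)‖ₑ = ENNReal.ofReal (Real.exp (p * w.re)) := by
    intro w
    rw [← ofReal_norm, Complex.norm_exp, Complex.re_ofReal_mul]
  simp only [e] at h
  have hc : ContinuousOn (fun z => Real.exp (p * (l (ρ * z)).re)) (ball 0 1) := by
    have : ContinuousOn (fun z => l (ρ * z)) (ball 0 1) :=
      hl.continuousOn.comp (by fun_prop) fun z hz => real_mul_mem h0.le h1.le hz
    exact Real.continuous_exp.comp_continuousOn ((Complex.continuous_re.comp_continuousOn this).const_smul p)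
  rw [integral_eq_lintegral_of_nonneg_ae (Filter.Eventually.of_forall fun z => (Real.exp_pos _).le) (berg_aesm α hc),
    integral_eq_lintegral_of_nonneg_ae (Filter.Eventually.of_forall fun z => (Real.exp_pos _).le) hi.1]
  refine ENNReal.toReal_mono ?_ h
  have h2 := hi.2
  rw [hasFiniteIntegral_iff_ofReal (Filter.Eventually.of_forall fun z => (Real.exp_pos _).le)] at h2
  exact h2.ne

open Filter in
lemma hyper_log {α p q : ℝ} (hα : 1 < α) (hp : 0 < p) (hpq : p < q)
    {l : ℂ → ℂ} (hl : DifferentiableOn ℂ l (ball (0:ℂ) 1))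
    (hi : Integrable (fun z => Real.exp (p * (l z).re)) (bergmanMeasure α)) :
    (∫ z, Real.exp (q * (l ((√(p/q) : ℝ) * z)).re) ∂(bergmanMeasure α))^(1/q) ≤
    (∫ z, Real.exp (p * (l z).re) ∂(bergmanMeasure α))^(1/p) := by
  have hq : 0 < q := hp.trans hpq
  set r := √(p/q) with hr
  have hr0 : 0 ≤ r := Real.sqrt_nonneg _
  have hr1 : r < 1 := by
    rw [hr, Real.sqrt_lt' one_pos, one_pow, div_lt_one hq]; exact hpq
  set ρ : ℕ → ℝ := fun n => 1 - 1/((n:ℝ)+2) with hρ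
  have hρ0 : ∀ n, 0 < ρ n := fun n => by
    simp only [hρ]
    rw [sub_pos, div_lt_one (by positivity)]
    have : (0:ℝ) ≤ n := by positivity
    linarith
  have hρ1 : ∀ n, ρ n < 1 := fun n => by
    simp only [hρ]
    have : (0:ℝ) < 1/((n:ℝ)+2) := by positivity
    linarith
  have hρl : Tendsto ρ atTop (nhds 1) := by
    have h := (tendsto_one_div_add_atTop_nhds_zero_nat (𝕜 := ℝ)).comp (tendsto_add_atTop_nat 1)
    have h2 := h.const_sub 1
    rw [sub_zero] at h2
    refine h2.congr fun n => ?_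
    simp only [hρ, Function.comp]
    push_cast
    ring_nf
  obtain ⟨B, hB⟩ := (isCompact_closedBall (0:ℂ) r).exists_bound_of_continuousOn
    (f := l) (hl.continuousOn.mono (closedBall_subset_ball hr1))
  have t := berg_dct2 hα (F := fun n z => Real.exp (q * (l (ρ n * (r * z))).re))
    (G := fun z => Real.exp (q * (l (r * z)).re)) (Real.exp (q * B))
    (fun n => by
      have : ContinuousOn (fun z => l (ρ n * (r * z))) (ball 0 1) :=
        hl.continuousOn.comp (by fun_prop) fun z hz => real_mul_mem (hρ0 n).le (hρ1 n).le (real_mul_mem hr0 hr1.le hz)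
      exact Real.continuous_exp.comp_continuousOn ((Complex.continuous_re.comp_continuousOn this).const_smul q))
    (fun n z hz => by
      rw [Real.abs_exp]
      have e : ((ρ n : ℝ) : ℂ) * (r * z) = r * (ρ n * z) := by ring
      have := (Complex.re_le_norm _).trans (hB _ (real_mul_mem' hr0 (real_mul_mem (hρ0 n).le (hρ1 n).le hz)))
      rw [e]
      gcongr)
    (fun z hz => by
      have hz' := real_mul_mem hr0 hr1.le hz
      have c := (hl.differentiableAt (isOpen_ball.mem_nhds hz')).continuousAt
      have a : Tendsto (fun n => ((ρ n : ℝ) : ℂ) * (r * z)) atTop (nhds (r * z)) := by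
        have := ((Complex.continuous_ofReal.tendsto _).comp hρl).mul_const ((r:ℂ) * z)
        simpa using this
      exact (Real.continuous_exp.tendsto _).comp (((Complex.continuous_re.tendsto _).comp (c.tendsto.comp a)).const_mul q))
  refine le_of_tendsto' (t.rpow_const (Or.inr (by positivity))) fun n => ?_
  refine (hyper_rho hα hp hpq hl (hρ0 n) (hρ1 n)).trans ?_
  have := dil_contract' hα (hρ0 n) (hρ1 n) hl hi
  gcongr

theorem hypercontractivity_zero_free_q_lt_two
    (p q α : ℝ) (hp : 0 < p) (hpq : p < q) (hq2 : q < 2) (hα : 1 < α)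
    (f : ℂ → ℂ) (hf : DifferentiableOn ℂ f (ball (0 : ℂ) 1))
    (hf0 : ∀ z ∈ ball (0 : ℂ) 1, f z ≠ 0)
    (hfp : Integrable (fun z => ‖f z‖ ^ p) (bergmanMeasure α)) :
    (∫ z, ‖f ((Real.sqrt (p / q) : ℂ) * z)‖ ^ q ∂(bergmanMeasure α)) ^ (1 / q) ≤
      (∫ z, ‖f z‖ ^ p ∂(bergmanMeasure α)) ^ (1 / p) := by
  obtain ⟨l, hl, hfl⟩ := exists_log_ball hf hf0
  have hq : 0 < q := hp.trans hpq
  have e1 : (fun z => ‖f z‖ ^ p) =ᵐ[bergmanMeasure α] fun z => Real.exp (p * (l z).re) := by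
    filter_upwards [berg_ae_ball α] with z hz
    rw [hfl z hz, norm_exp_rpow]
  have e2 : (fun z => ‖f ((Real.sqrt (p / q) : ℂ) * z)‖ ^ q) =ᵐ[bergmanMeasure α]
      fun z => Real.exp (q * (l ((√(p/q) : ℝ) * z)).re) := by
    filter_upwards [berg_ae_ball α] with z hz
    rw [hfl _ (real_mul_mem (Real.sqrt_nonneg _) (Real.sqrt_le_one.2 ((div_le_one hq).2 hpq.le)) hz), norm_exp_rpow]
  rw [integral_congr_ae e1, integral_congr_ae e2]
  exact hyper_log hα hp hpq hl (hfp.congr e1)
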